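/- There exists a Hausdorff topological semilattice E that is 𝓗-complete but not 𝓐𝓗-complete: E is closed in every Hausdorff topological semilattice into which it topologically embeds, yet E admits a continuous surjective semilattice homomorphism onto a dense non-closed subsemilattice of some Hausdorff topological semilattice. -/

import Mathlib

open Topology Set

/-- A filter is free if the intersection of all its members is empty. -/
def FreeF (F : Filter ℕ) : Prop := ⋂₀ F.sets = ∅

/-- The topology on ℕ_ℱ = ℕ ∪ {ℱ} (modelled as `Option ℕ`, with `none` the point ℱ):
all points of ℕ are isolated, and the sets F ∪ {ℱ}, F ∈ ℱ, form a neighbourhood base at ℱ. -/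
def nfTop (F : Filter ℕ) : TopologicalSpace (Option ℕ) where
  IsOpen U := none ∈ U → {n : ℕ | some n ∈ U} ∈ F
  isOpen_univ := fun _ => by simp
  isOpen_inter := fun U V hU hV h => Filter.inter_mem (hU h.1) (hV h.2)
  isOpen_sUnion := fun S hS h => by
    obtain ⟨U, hUS, hnU⟩ := h
    exact Filter.mem_of_superset (hS U hUS hnU) fun n hn => ⟨U, hUS, hn⟩

/-- min on ℕ extended to ℕ_ℱ by min(n,ℱ) = n, min(ℱ,ℱ) = ℱ. -/
def minOp : Option ℕ → Option ℕ → Option ℕ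
  | none, y => y
  | some a, none => some a
  | some a, some b => some (min a b)

/-- max on ℕ extended to ℕ_ℱ by max(n,ℱ) = ℱ = max(ℱ,ℱ). -/
def maxOp : Option ℕ → Option ℕ → Option ℕ
  | none, _ => none
  | _, none => none
  | some a, some b => some (max a b)

/-- `X` with operation `op` is a (Hausdorff) topological semilattice. -/
structure IsTopSemilattice (X : Type*) [TopologicalSpace X] (op : X → X → X) : Prop where
  t2 : T2Space X
  comm : ∀ a b, op a b = op b a
  idem : ∀ a, op a a = a
  assoc : ∀ a b c, op (op a b) c = op a (op b c)
  cont : Continuous fun p : X × X => op p.1 p.2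

/-- 𝓗-completeness: the image under any topological embedding which is a semilattice
homomorphism into a Hausdorff topological semilattice is closed. -/
def HComplete (X : Type*) [TopologicalSpace X] (op : X → X → X) : Prop :=
  ∀ (Y : Type*) [TopologicalSpace Y] (opY : Y → Y → Y), IsTopSemilattice Y opY →
    ∀ f : X → Y, Topology.IsEmbedding f →
      (∀ a b, f (op a b) = opY (f a) (f b)) → IsClosed (Set.range f)

/-- 𝓐𝓗-completeness: the image under any continuous semilattice homomorphism
into a Hausdorff topological semilattice is closed. -/
def AHComplete (X : Type*) [TopologicalSpace X] (op : X → X → X) : Prop :=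
  ∀ (Y : Type*) [TopologicalSpace Y] (opY : Y → Y → Y), IsTopSemilattice Y opY →
    ∀ f : X → Y, Continuous f →
      (∀ a b, f (op a b) = opY (f a) (f b)) → IsClosed (Set.range f)

/-!
A comb consists of a zero, a spine `ℕ` and teeth `ℕ ∪ {⊤}` indexed by `i : ι`, where the spine acts
on each tooth by `min` and distinct teeth multiply to zero. Everything is isolated except the tips
of the teeth, and the `i`-th tooth converges to its tip along a free filter `F i`.

Suppose that a free ultrafilter `U` on the comb converges to a point `y` of a larger Hausdorff
semilattice. If `U` lives on the spine or on the `i`-th tooth, then multiplication by `y` fixes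
every finite point of the `i`-th tooth, hence also its tip. For `U` on the `i`-th tooth this forces
`y` to be the tip. For `U` on the spine it holds for all `i`, and as the spine moves each tip down
its tooth, `U` is finer than every `F i`, which is impossible when `⨅ i, F i = ⊥`. In the remaining
case `U`-almost all products are zero, so `y = y * y` is zero. Hence the comb is 𝓗-complete,
although collapsing its teeth to zero maps it continuously onto `ℕ`, which is dense and not closed
in `ℕ∞`.
-/

open Filter

theorem isTopSemilattice_inf (α : Type*) [TopologicalSpace α] [T2Space α] [SemilatticeInf α]
    [ContinuousInf α] : IsTopSemilattice α (· ⊓ ·) where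
  t2 := inferInstance
  comm := inf_comm
  idem := inf_idem
  assoc := inf_assoc
  cont := continuous_inf

theorem isClosed_range_of_forall_ultrafilter {X Y : Type*} [TopologicalSpace Y] {f : X → Y}
    (h : ∀ (U : Ultrafilter X) (y : Y), Tendsto f U (𝓝 y) → y ∈ range f) :
    IsClosed (range f) :=
  isClosed_iff_ultrafilter.2 fun y V hVy hV =>
    have := V.neBot.comap_of_range_mem hV
    h (.of (comap f V)) y ((tendsto_comap.mono_left (Ultrafilter.of_le _)).mono_right hVy)

section Extension

variable {X Y : Type*} [SemilatticeInf X] [TopologicalSpace Y] {opY : Y → Y → Y} {f : X → Y}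
  {L : Filter X} {y : Y}

theorem tendsto_map_inf_right (hY : IsTopSemilattice Y opY)
    (hom : ∀ a b, f (a ⊓ b) = opY (f a) (f b)) (hLy : Tendsto f L (𝓝 y)) (z : X) :
    Tendsto (fun x => f (x ⊓ z)) L (𝓝 (opY y (f z))) := by
  simpa only [hom, Function.comp_def] using
    (hY.cont.tendsto (y, f z)).comp (hLy.prodMk_nhds tendsto_const_nhds)

/-- The limit `y` acts as the identity on the closed set of its fixed points, which contains every
`g a` and therefore `z`. -/
theorem tendsto_map_inf_of_eventually_le [TopologicalSpace X] [L.NeBot]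
    (hY : IsTopSemilattice Y opY) (hf : Continuous f) (hom : ∀ a b, f (a ⊓ b) = opY (f a) (f b))
    (hLy : Tendsto f L (𝓝 y)) {α : Type*} {A : Filter α} [A.NeBot] {g : α → X} {z : X}
    (hg : Tendsto g A (𝓝 z)) (hle : ∀ a, ∀ᶠ x in L, g a ≤ x) :
    Tendsto (fun x => f (x ⊓ z)) L (𝓝 (f z)) := by
  have := hY.t2
  have fixed (a : α) : opY y (f (g a)) = f (g a) := by
    refine tendsto_nhds_unique_of_eventuallyEq (tendsto_map_inf_right hY hom hLy (g a))
      tendsto_const_nhds ?_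
    filter_upwards [hle a] with x hx
    rw [inf_eq_right.2 hx]
  have closed : IsClosed {w | opY y w = w} :=
    isClosed_eq (hY.cont.comp (continuous_const.prodMk continuous_id)) continuous_id
  have fixed_lim : opY y (f z) = f z :=
    closed.mem_of_tendsto ((hf.tendsto z).comp hg) (Eventually.of_forall fixed)
  simpa only [fixed_lim] using tendsto_map_inf_right hY hom hLy z

end Extension

/-- The comb: a zero, a spine `ℕ`, and teeth `ℕ ∪ {⊤}` indexed by `ι`. The filters `F i` do not
enter the carrier; they are parameters of the type because its topology depends on them. -/
inductive Comb {ι : Type*} (F : ι → Filter ℕ)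
  | zero : Comb F
  | spine (n : ℕ) : Comb F
  | tooth (i : ι) (a : ℕ∞) : Comb F

namespace Comb

variable {ι : Type*} {F : ι → Filter ℕ}

section Order

open Classical in
/-- The semilattice operation of the comb. -/
noncomputable instance : Min (Comb F) where
  min
    | zero, _ => zero
    | _, zero => zero
    | spine m, spine n => spine (m ⊓ n)
    | spine m, tooth i a => tooth i (m ⊓ a)
    | tooth i a, spine m => tooth i (a ⊓ m)
    | tooth i a, tooth j b => if i = j then tooth i (a ⊓ b) else zero

@[simp] theorem zero_inf (x : Comb F) : zero ⊓ x = zero := rfl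

@[simp] theorem inf_zero (x : Comb F) : x ⊓ zero = zero := by cases x <;> rfl

@[simp] theorem spine_inf_spine (m n : ℕ) : (spine m ⊓ spine n : Comb F) = spine (m ⊓ n) := rfl

@[simp] theorem spine_inf_tooth (m : ℕ) (i : ι) (a : ℕ∞) :
    (spine m ⊓ tooth i a : Comb F) = tooth i (m ⊓ a) := rfl

@[simp] theorem tooth_inf_spine (i : ι) (a : ℕ∞) (m : ℕ) :
    (tooth i a ⊓ spine m : Comb F) = tooth i (a ⊓ m) := rfl

@[simp] theorem tooth_inf_tooth_self (i : ι) (a b : ℕ∞) :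
    (tooth i a ⊓ tooth i b : Comb F) = tooth i (a ⊓ b) := if_pos rfl

theorem tooth_inf_tooth_of_ne {i j : ι} (h : i ≠ j) (a b : ℕ∞) :
    (tooth i a ⊓ tooth j b : Comb F) = zero := if_neg h

protected theorem inf_comm (x y : Comb F) : x ⊓ y = y ⊓ x := by
  cases x <;> cases y
  case tooth.tooth i a j b =>
    obtain rfl | hij := eq_or_ne i j
    · simp [inf_comm]
    · rw [tooth_inf_tooth_of_ne hij, tooth_inf_tooth_of_ne hij.symm]
  all_goals simp [inf_comm]

protected theorem inf_assoc (x y z : Comb F) : x ⊓ y ⊓ z = x ⊓ (y ⊓ z) := by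
  cases x <;> cases y <;> cases z
  case tooth.tooth.tooth i a j b k c =>
    obtain rfl | hij := eq_or_ne i j
    · obtain rfl | hik := eq_or_ne i k <;> simp [inf_assoc, tooth_inf_tooth_of_ne, *]
    · obtain rfl | hjk := eq_or_ne j k <;> simp [tooth_inf_tooth_of_ne, *]
  case spine.tooth.tooth _ i _ j _ | tooth.spine.tooth i _ _ j _ | tooth.tooth.spine i _ j _ _ =>
    obtain rfl | hij := eq_or_ne i j <;> simp [inf_assoc, tooth_inf_tooth_of_ne, *]
  all_goals simp [inf_assoc, Nat.mono_cast.map_min]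

protected theorem inf_idem (x : Comb F) : x ⊓ x = x := by cases x <;> simp

noncomputable instance : SemilatticeInf (Comb F) :=
  SemilatticeInf.mk' Comb.inf_comm Comb.inf_assoc Comb.inf_idem

theorem tooth_le_spine {i : ι} {a : ℕ∞} {n : ℕ} : (tooth i a : Comb F) ≤ spine n ↔ a ≤ n := by
  rw [← inf_eq_left, tooth_inf_spine, tooth.injEq, eq_self, true_and, inf_eq_left]

theorem tooth_le_tooth {i : ι} {a b : ℕ∞} : (tooth i a : Comb F) ≤ tooth i b ↔ a ≤ b := by
  rw [← inf_eq_left, tooth_inf_tooth_self, tooth.injEq, eq_self, true_and, inf_eq_left]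

end Order

section Topology

/-- The topology in which the `i`-th tooth is an open copy of `ℕ_ℱ` with `ℱ = F i`, and zero and the
spine are discrete and open. -/
instance : TopologicalSpace (Comb F) where
  IsOpen U := ∀ i, tooth i ⊤ ∈ U → ∀ᶠ n : ℕ in F i, tooth i n ∈ U
  isOpen_univ _ _ := by simp
  isOpen_inter U V hU hV i h := (hU i h.1).and (hV i h.2)
  isOpen_sUnion S hS i := fun ⟨U, hUS, hU⟩ =>
    (hS U hUS i hU).mono fun _ hn => ⟨U, hUS, hn⟩

theorem isOpen_iff {U : Set (Comb F)} :
    IsOpen U ↔ ∀ i, tooth i ⊤ ∈ U → ∀ᶠ n : ℕ in F i, tooth i n ∈ U := Iff.rfl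

theorem nhds_eq_pure_or_eq_tooth_top (x : Comb F) : 𝓝 x = pure x ∨ ∃ i, x = tooth i ⊤ :=
  or_iff_not_imp_right.2 fun hx => (isOpen_singleton_iff_nhds_eq_pure x).1 <|
    isOpen_iff.2 fun i hi => absurd ⟨i, (mem_singleton_iff.1 hi).symm⟩ hx

theorem mem_nhds_tooth_top {i : ι} {s : Set (Comb F)} :
    s ∈ 𝓝 (tooth i ⊤) ↔ tooth i ⊤ ∈ s ∧ ∀ᶠ n : ℕ in F i, tooth i n ∈ s := by
  refine ⟨fun hs => ?_, fun ⟨htop, hs⟩ => ?_⟩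
  · obtain ⟨U, hUs, hU, htop⟩ := mem_nhds_iff.1 hs
    exact ⟨hUs htop, (isOpen_iff.1 hU i htop).mono fun _ hn => hUs hn⟩
  · have hopen : IsOpen (s ∩ range (tooth i)) := by
      rintro j ⟨-, a, ha⟩
      obtain ⟨rfl, -⟩ := tooth.inj ha
      exact hs.mono fun n hn => ⟨hn, mem_range_self _⟩
    exact mem_of_superset (hopen.mem_nhds ⟨htop, mem_range_self _⟩) inter_subset_left

theorem range_tooth_mem_nhds (i : ι) : range (tooth i) ∈ 𝓝 (tooth i ⊤ : Comb F) :=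
  mem_nhds_tooth_top.2 ⟨mem_range_self _, Eventually.of_forall fun _ => mem_range_self _⟩

theorem tendsto_tooth_natCast_iff {i : ι} {G : Filter ℕ} :
    Tendsto (fun n : ℕ => (tooth i n : Comb F)) G (𝓝 (tooth i ⊤)) ↔ G ≤ F i := by
  refine ⟨fun h s hs => ?_, fun h s hs => h (mem_nhds_tooth_top.1 hs).2⟩
  have hmem : {x : Comb F | ∀ n : ℕ, x = tooth i n → n ∈ s} ∈ 𝓝 (tooth i ⊤) :=
    mem_nhds_tooth_top.2 ⟨by simp, by simpa using hs⟩
  exact (h.eventually hmem).mono fun n hn => hn n rfl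

theorem continuous_iff {Z : Type*} [TopologicalSpace Z] {g : Comb F → Z} :
    Continuous g ↔ ∀ i, Tendsto (fun n : ℕ => g (tooth i n)) (F i) (𝓝 (g (tooth i ⊤))) :=
  ⟨fun hg _ => (hg.tendsto _).comp (tendsto_tooth_natCast_iff.2 le_rfl),
    fun h => ⟨fun _ hV i hi => (h i).eventually (hV.mem_nhds hi)⟩⟩

theorem disjoint_pure_nhds_tooth_top {i : ι} (hF : F i ≤ atTop) {x : Comb F}
    (hx : x ≠ tooth i ⊤) : Disjoint (pure x) (𝓝 (tooth i ⊤)) := by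
  have hne : ∀ᶠ n : ℕ in F i, tooth i n ≠ x := by
    refine hF ?_
    obtain ⟨m, rfl⟩ | hm := em (∃ m : ℕ, tooth i m = x)
    · filter_upwards [eventually_ne_atTop m] with n hn
      simpa using hn
    · exact Eventually.of_forall fun n hn => hm ⟨n, hn⟩
  rw [disjoint_comm, ← principal_singleton, disjoint_principal_right]
  exact mem_nhds_tooth_top.2 ⟨hx.symm, hne⟩

theorem t2Space (hF : ∀ i, F i ≤ atTop) : T2Space (Comb F) := by
  refine t2Space_iff_disjoint_nhds.2 fun x y (hxy : x ≠ y) => show Disjoint (𝓝 x) (𝓝 y) from ?_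
  rcases nhds_eq_pure_or_eq_tooth_top x with hx | ⟨i, rfl⟩ <;>
    rcases nhds_eq_pure_or_eq_tooth_top y with hy | ⟨j, rfl⟩
  · rwa [hx, hy, disjoint_pure_pure]
  · rw [hx]
    exact disjoint_pure_nhds_tooth_top (hF j) hxy
  · rw [hy]
    exact (disjoint_pure_nhds_tooth_top (hF i) hxy.symm).symm
  · have hij : i ≠ j := fun h => hxy (h ▸ rfl)
    refine disjoint_of_disjoint_of_mem ?_ (range_tooth_mem_nhds i) (range_tooth_mem_nhds j)
    rw [Set.disjoint_left]
    rintro _ ⟨a, rfl⟩ ⟨b, hb⟩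
    exact hij (tooth.inj hb).1.symm

theorem tendsto_tooth_natCast_inf {i : ι} (hF : F i ≤ atTop) (a : ℕ∞) :
    Tendsto (fun n : ℕ => (tooth i (n ⊓ a) : Comb F)) (F i) (𝓝 (tooth i a)) := by
  induction a using ENat.recTopCoe with
  | top => simpa using tendsto_tooth_natCast_iff.2 le_rfl
  | coe m =>
    refine tendsto_const_nhds.congr' ?_
    filter_upwards [hF (eventually_ge_atTop m)] with n hn
    rw [inf_eq_right.2 (Nat.cast_le.2 hn)]

theorem continuous_inf_const (hF : ∀ i, F i ≤ atTop) (y : Comb F) : Continuous (· ⊓ y) := by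
  refine continuous_iff.2 fun i => ?_
  cases y with
  | zero => simpa using tendsto_const_nhds
  | spine m => simpa using tendsto_tooth_natCast_inf (hF i) m
  | tooth j a =>
    obtain rfl | hij := eq_or_ne i j
    · simpa using tendsto_tooth_natCast_inf (hF i) a
    · simpa [tooth_inf_tooth_of_ne hij] using tendsto_const_nhds

theorem inf_mem_of_mem_range_tooth {i : ι} {s : Set (Comb F)} {x y : Comb F}
    (hx : x ∈ s ∩ range (tooth i)) (hy : y ∈ s ∩ range (tooth i)) : x ⊓ y ∈ s := by
  obtain ⟨hxs, a, rfl⟩ := hx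
  obtain ⟨hys, b, rfl⟩ := hy
  rcases le_total a b with hab | hab
  · rwa [inf_eq_left.2 (tooth_le_tooth.2 hab)]
  · rwa [inf_eq_right.2 (tooth_le_tooth.2 hab)]

theorem tendsto_inf_prod_nhds_tooth_top (i j : ι) :
    Tendsto (fun p : Comb F × Comb F => p.1 ⊓ p.2) (𝓝 (tooth i ⊤) ×ˢ 𝓝 (tooth j ⊤))
      (𝓝 (tooth i ⊤ ⊓ tooth j ⊤)) := by
  obtain rfl | hij := eq_or_ne i j
  · rw [inf_idem]
    refine fun s hs => mem_map.2 ?_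
    have hmem := inter_mem hs (range_tooth_mem_nhds i)
    filter_upwards [prod_mem_prod hmem hmem] with p hp
    exact inf_mem_of_mem_range_tooth hp.1 hp.2
  · rw [tooth_inf_tooth_of_ne hij]
    refine tendsto_const_nhds.congr' ?_
    filter_upwards [prod_mem_prod (range_tooth_mem_nhds i) (range_tooth_mem_nhds j)]
    rintro ⟨_, _⟩ ⟨⟨a, rfl⟩, ⟨b, rfl⟩⟩
    exact (tooth_inf_tooth_of_ne hij a b).symm

theorem continuousInf (hF : ∀ i, F i ≤ atTop) : ContinuousInf (Comb F) := by
  refine ⟨continuous_iff_continuousAt.2 fun ⟨x, y⟩ => ?_⟩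
  rw [ContinuousAt, nhds_prod_eq]
  obtain hy | ⟨j, rfl⟩ := nhds_eq_pure_or_eq_tooth_top y
  · rw [hy, prod_pure, tendsto_map'_iff]
    exact (continuous_inf_const hF y).tendsto x
  obtain hx | ⟨i, rfl⟩ := nhds_eq_pure_or_eq_tooth_top x
  · rw [hx, pure_prod, tendsto_map'_iff]
    simpa only [Function.comp_def, inf_comm x] using (continuous_inf_const hF x).tendsto _
  exact tendsto_inf_prod_nhds_tooth_top i j

theorem isTopSemilattice (hF : ∀ i, F i ≤ atTop) : IsTopSemilattice (Comb F) (· ⊓ ·) :=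
  have := t2Space hF
  have := continuousInf hF
  isTopSemilattice_inf (Comb F)

end Topology

section HComplete

theorem eventually_tooth_le {L : Filter (Comb F)} (hL : L ≤ cofinite) {i : ι}
    (h : ∀ᶠ x in L, x ∈ range spine ∪ range (tooth i)) (m : ℕ) :
    ∀ᶠ x in L, tooth i m ≤ x := by
  have hfin : (spine '' Iio m ∪ (fun n : ℕ => tooth i n) '' Iio m : Set (Comb F)).Finite :=
    ((finite_Iio m).image _).union ((finite_Iio m).image _)
  filter_upwards [h, hL hfin.compl_mem_cofinite] with x hx hlarge
  rcases hx with ⟨n, rfl⟩ | ⟨a, rfl⟩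
  · exact tooth_le_spine.2 (Nat.cast_le.2 (not_lt.1 fun hn => hlarge (.inl ⟨n, hn, rfl⟩)))
  · refine tooth_le_tooth.2 (not_lt.1 fun ha => hlarge (.inr ?_))
    lift a to ℕ using ha.ne_top
    exact ⟨a, Nat.cast_lt.1 ha, rfl⟩

variable {Y : Type*} [TopologicalSpace Y] {opY : Y → Y → Y} {f : Comb F → Y}
  {L : Filter (Comb F)} [L.NeBot] {y : Y}

theorem tendsto_inf_tooth_top {i : ι} [(F i).NeBot] (hY : IsTopSemilattice Y opY)
    (hf : IsEmbedding f) (hom : ∀ a b, f (a ⊓ b) = opY (f a) (f b)) (hLy : Tendsto f L (𝓝 y))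
    (hL : L ≤ cofinite) (h : ∀ᶠ x in L, x ∈ range spine ∪ range (tooth i)) :
    Tendsto (· ⊓ tooth i ⊤) L (𝓝 (tooth i ⊤)) :=
  hf.tendsto_nhds_iff.2 <| tendsto_map_inf_of_eventually_le hY hf.continuous hom hLy
    (tendsto_tooth_natCast_iff.2 le_rfl) (eventually_tooth_le hL h)

theorem eq_map_tooth_top_of_eventually_mem {i : ι} [(F i).NeBot] (hY : IsTopSemilattice Y opY)
    (hf : IsEmbedding f) (hom : ∀ a b, f (a ⊓ b) = opY (f a) (f b)) (hLy : Tendsto f L (𝓝 y))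
    (hL : L ≤ cofinite) (h : ∀ᶠ x in L, x ∈ range (tooth i)) : y = f (tooth i ⊤) := by
  have := hY.t2
  have hlim : Tendsto (· ⊓ tooth i ⊤) L (𝓝 (tooth i ⊤)) :=
    tendsto_inf_tooth_top hY hf hom hLy hL (h.mono fun _ => .inr)
  refine tendsto_nhds_unique_of_eventuallyEq hLy ((hf.continuous.tendsto _).comp hlim) ?_
  filter_upwards [h]
  rintro _ ⟨a, rfl⟩
  simp

theorem iInf_ne_bot_of_eventually_mem_range_spine [∀ i, (F i).NeBot]
    (hY : IsTopSemilattice Y opY) (hf : IsEmbedding f)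
    (hom : ∀ a b, f (a ⊓ b) = opY (f a) (f b)) (hLy : Tendsto f L (𝓝 y)) (hL : L ≤ cofinite)
    (h : ∀ᶠ x in L, x ∈ range spine) : ⨅ i, F i ≠ ⊥ := by
  have hne : (comap spine L).NeBot := NeBot.comap_of_range_mem ‹_› h
  refine (hne.mono <| le_iInf fun i => tendsto_tooth_natCast_iff.1 ?_).ne
  have hlim : Tendsto (· ⊓ tooth i ⊤) L (𝓝 (tooth i ⊤)) :=
    tendsto_inf_tooth_top hY hf hom hLy hL (h.mono fun _ => .inl)
  have hspine : Tendsto (fun n : ℕ => (spine n ⊓ tooth i ⊤ : Comb F)) (comap spine L)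
      (𝓝 (tooth i ⊤)) := hlim.comp tendsto_comap
  simpa only [spine_inf_tooth, inf_top_eq] using hspine

theorem eq_map_zero_of_eventually_notMem (hY : IsTopSemilattice Y opY)
    (hom : ∀ a b, f (a ⊓ b) = opY (f a) (f b)) (hLy : Tendsto f L (𝓝 y))
    (hspine : ∀ᶠ x in L, x ∉ range spine)
    (htooth : ∀ i, ∀ᶠ x in L, x ∉ range (tooth i)) : y = f zero := by
  have := hY.t2
  have inf_eq_zero (x : Comb F) (hx : x ∉ range spine) : ∀ᶠ x' in L, x' ⊓ x = zero := by
    cases x with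
    | zero => simp
    | spine n => exact absurd (mem_range_self n) hx
    | tooth i a =>
      filter_upwards [hspine, htooth i] with x' hs ht
      cases x' with
      | zero => rfl
      | spine n => exact absurd (mem_range_self n) hs
      | tooth j b => exact tooth_inf_tooth_of_ne (fun hji => ht ⟨b, by rw [hji]⟩) b a
  have hmul (x : Comb F) (hx : x ∉ range spine) : opY y (f x) = f zero :=
    tendsto_nhds_unique_of_eventuallyEq (tendsto_map_inf_right hY hom hLy x) tendsto_const_nhds
      ((inf_eq_zero x hx).mono fun _ h => congrArg f h)
  have hsq : Tendsto (fun x => opY y (f x)) L (𝓝 y) := by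
    simpa only [hY.idem, Function.comp_def] using
      (hY.cont.tendsto (y, y)).comp (tendsto_const_nhds.prodMk_nhds hLy)
  exact tendsto_nhds_unique_of_eventuallyEq hsq tendsto_const_nhds (hspine.mono hmul)

theorem hComplete [∀ i, (F i).NeBot] (hF : ⨅ i, F i = ⊥) : HComplete (Comb F) (· ⊓ ·) := by
  intro Y _ opY hY f hf hom
  have := hY.t2
  refine isClosed_range_of_forall_ultrafilter fun U y hUy => ?_
  obtain hU | ⟨x, rfl⟩ := U.le_cofinite_or_eq_pure
  · by_cases hspine : ∀ᶠ x in (U : Filter (Comb F)), x ∈ range spine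
    · exact absurd hF (iInf_ne_bot_of_eventually_mem_range_spine hY hf hom hUy hU hspine)
    by_cases htooth : ∃ i, ∀ᶠ x in (U : Filter (Comb F)), x ∈ range (tooth i)
    · obtain ⟨i, hi⟩ := htooth
      exact ⟨_, (eq_map_tooth_top_of_eventually_mem hY hf hom hUy hU hi).symm⟩
    · exact ⟨_, (eq_map_zero_of_eventually_notMem hY hom hUy (Ultrafilter.eventually_not.2 hspine)
        fun i => Ultrafilter.eventually_not.2 (not_exists.1 htooth i)).symm⟩
  · exact ⟨x, tendsto_nhds_unique (tendsto_pure_nhds f x) hUy⟩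

end HComplete

section Height

/-- The homomorphism onto the spine, seen in `ℕ∞`, that collapses all teeth to zero. -/
def height : Comb F → ℕ∞
  | spine n => n
  | _ => 0

theorem continuous_height : Continuous (height : Comb F → ℕ∞) :=
  continuous_iff.2 fun _ => tendsto_const_nhds

theorem height_inf (x y : Comb F) : height (x ⊓ y) = height x ⊓ height y := by
  cases x <;> cases y
  case tooth.tooth i _ j _ =>
    obtain rfl | hij := eq_or_ne i j <;> simp [height, tooth_inf_tooth_of_ne, *]
  all_goals simp [height, Nat.mono_cast.map_min]

theorem range_height : range (height : Comb F → ℕ∞) = range ((↑) : ℕ → ℕ∞) := by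
  refine Subset.antisymm ?_ (range_subset_iff.2 fun n => ⟨spine n, rfl⟩)
  rintro _ ⟨_ | n | _, rfl⟩
  exacts [⟨0, rfl⟩, ⟨n, rfl⟩, ⟨0, rfl⟩]

end Height

end Comb

theorem denseRange_natCast_enat : DenseRange ((↑) : ℕ → ℕ∞) := fun a => by
  induction a using ENat.recTopCoe with
  | top => exact mem_closure_of_tendsto ENat.tendsto_natCast_nhds_top (.of_forall mem_range_self)
  | coe n => exact subset_closure (mem_range_self n)

theorem not_isClosed_range_natCast_enat : ¬ IsClosed (range ((↑) : ℕ → ℕ∞)) := fun h => by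
  have := denseRange_natCast_enat.closure_range
  rw [h.closure_eq, ENat.range_natCast] at this
  exact self_notMem_Iio (this.symm ▸ mem_univ ⊤)

/-- The free filters on `ℕ` generated by the tails of the even and of the odd numbers; being
disjoint, they make a two-toothed comb 𝓗-complete. -/
def parityFilter (b : Bool) : Filter ℕ := map (fun k => 2 * k + b.toNat) atTop

instance (b : Bool) : (parityFilter b).NeBot := map_neBot

theorem parityFilter_le_atTop (b : Bool) : parityFilter b ≤ atTop :=
  tendsto_atTop_mono (fun k => by rw [id]; omega) tendsto_id

theorem iInf_parityFilter : ⨅ b, parityFilter b = ⊥ := by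
  rw [iInf_bool_eq, ← disjoint_iff]
  refine disjoint_of_disjoint_of_mem ?_ range_mem_map range_mem_map
  rw [Set.disjoint_left]
  rintro _ ⟨k, rfl⟩ ⟨l, hl⟩
  simp only [Bool.toNat_true, Bool.toNat_false] at hl
  omega

/-- there exists a Hausdorff topological semilattice which is 𝓗-complete
but not 𝓐𝓗-complete: it is closed in every Hausdorff topological semilattice into which
it topologically embeds, yet it admits a continuous surjective semilattice homomorphism
onto a dense non-closed subsemilattice of some Hausdorff topological semilattice. -/
theorem exists_hComplete_not_ahComplete :
    ∃ (X : Type) (_ : TopologicalSpace X) (op : X → X → X),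
      IsTopSemilattice X op ∧ HComplete X op ∧
      ∃ (Y : Type) (_ : TopologicalSpace Y) (opY : Y → Y → Y),
        IsTopSemilattice Y opY ∧
        ∃ f : X → Y, Continuous f ∧ (∀ a b, f (op a b) = opY (f a) (f b)) ∧
          DenseRange f ∧ ¬ IsClosed (Set.range f) := by
  refine ⟨Comb parityFilter, inferInstance, (· ⊓ ·), Comb.isTopSemilattice parityFilter_le_atTop,
    Comb.hComplete iInf_parityFilter, ℕ∞, inferInstance, (· ⊓ ·), isTopSemilattice_inf ℕ∞,
    Comb.height, Comb.continuous_height, Comb.height_inf, ?_, ?_⟩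
  · rw [DenseRange, Comb.range_height]
    exact denseRange_natCast_enat
  · rw [Comb.range_height]
    exact not_isClosed_range_natCast_enat
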